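/- arXiv:2211.15251 — 2 statements merged into one kernel-verified Lean document; each statement's English description precedes it below -/
import Mathlib

section
/- Let A ∈ ℝ^{M×N}, let L = λ_max(AᵀA), let 0 < η < 1/L, and define W_n = Σ_{i=1}^{n} C(n,i)(−1)^{i−1}(η AᵀA)^{i−1}. Then W_n is symmetric positive definite and every eigenvalue of W_n is at most n; in particular λ_max(W_n) ≤ n. -/
open Matrix Finset

/-!
The polynomial `∑ C(n,i) (-1)^(i-1) x^(i-1)` is `(1 - (1 - x)^n) / x`, which is the geometric sum
`∑_{k<n} (1 - x)^k`. On `[0, 2)` the ratio `1 - x` lies in `(-1, 1]`, so the geometric sum lies in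
`(0, n]`. By spectral mapping, these are bounds on the eigenvalues of `W_n`, valid for every
`0 ≤ η < 2 / L`.
-/

open Polynomial in
theorem sum_Icc_choose_mul_neg_one_pow_mul_pow {R : Type*} [CommRing R] (x : R) (n : ℕ) :
    ∑ i ∈ Icc 1 n, (n.choose i : R) * (-1) ^ (i - 1) * x ^ (i - 1) =
      ∑ k ∈ range n, (1 - x) ^ k := by
  have hgeom := congrArg (eval (-x)) (geom_sum_X_comp_X_add_one_eq_sum (R := R) n)
  simp only [eval_comp, eval_finsetSum, eval_pow, eval_X, eval_add, eval_one, eval_mul,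
    eval_natCast, neg_add_eq_sub] at hgeom
  rw [hgeom, ← Ico_add_one_right_eq_Icc, sum_Ico_eq_sum_range, Nat.add_sub_cancel]
  refine sum_congr rfl fun k _ => ?_
  rw [add_comm 1 k, Nat.add_sub_cancel, mul_assoc, ← mul_pow, neg_one_mul]

theorem geom_sum_le_natCast_of_abs_le_one {R : Type*} [Ring R] [LinearOrder R]
    [IsStrictOrderedRing R] {x : R} (hx : |x| ≤ 1) (n : ℕ) : ∑ k ∈ range n, x ^ k ≤ n := by
  have hpow (k : ℕ) : x ^ k ≤ 1 :=
    (le_abs_self _).trans (abs_pow x k ▸ pow_le_one₀ (abs_nonneg x) hx)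
  simpa using sum_le_card_nsmul (range n) (x ^ ·) 1 fun k _ => hpow k

section WeightPolynomial

open Polynomial

/-- The polynomial `w` for which `W_n = w(AᵀA)`. The step size `η` is part of the polynomial, so
that it is evaluated at the Gram matrix itself rather than at `η • AᵀA`. -/
noncomputable def weightPolynomial {R : Type*} [CommRing R] (η : R) (n : ℕ) : R[X] :=
  ∑ i ∈ Icc 1 n, C ((n.choose i : R) * (-1) ^ (i - 1)) * (C η * X) ^ (i - 1)

theorem aeval_weightPolynomial {R S : Type*} [CommRing R] [Ring S] [Algebra R S]
    (η : R) (n : ℕ) (a : S) :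
    aeval a (weightPolynomial η n) =
      ∑ i ∈ Icc 1 n, ((n.choose i : R) * (-1) ^ (i - 1)) • (η • a) ^ (i - 1) := by
  simp only [weightPolynomial, map_sum, ← smul_eq_C_mul, map_smul, map_pow, aeval_X]

theorem eval_weightPolynomial {R : Type*} [CommRing R] (η : R) (n : ℕ) (x : R) :
    (weightPolynomial η n).eval x = ∑ k ∈ range n, (1 - η * x) ^ k := by
  rw [← sum_Icc_choose_mul_neg_one_pow_mul_pow]
  simp only [weightPolynomial, eval_finsetSum, eval_mul, eval_C, eval_pow, eval_X]

variable {R : Type*} [CommRing R] [LinearOrder R] [IsStrictOrderedRing R] {η x : R}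

theorem eval_weightPolynomial_pos (hx : η * x < 2) {n : ℕ} (hn : n ≠ 0) :
    0 < (weightPolynomial η n).eval x := by
  rw [eval_weightPolynomial]
  exact geom_sum_pos' (by linarith) hn

theorem eval_weightPolynomial_le (hx0 : 0 ≤ η * x) (hx2 : η * x ≤ 2) (n : ℕ) :
    (weightPolynomial η n).eval x ≤ n := by
  rw [eval_weightPolynomial]
  exact geom_sum_le_natCast_of_abs_le_one (abs_le.mpr ⟨by linarith, by linarith⟩) n

end WeightPolynomial

section HermitianMatrix

open Polynomial

variable {m 𝕜 : Type*} [Fintype m] [DecidableEq m] [RCLike 𝕜] {G : Matrix m m 𝕜}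

theorem isHermitian_aeval (hG : G.IsHermitian) (p : ℝ[X]) : (aeval G p).IsHermitian := by
  rw [← cfc_polynomial p G hG.isSelfAdjoint]
  exact (cfc_predicate p.eval G).isHermitian

theorem exists_eigenvalues_aeval_eq_eval (hG : G.IsHermitian) (p : ℝ[X])
    (hp : (aeval G p).IsHermitian) (j : m) :
    ∃ i, hp.eigenvalues j = p.eval (hG.eigenvalues i) := by
  have hspec : spectrum ℝ (aeval G p) = p.eval '' spectrum ℝ G := by
    rw [← cfc_polynomial p G hG.isSelfAdjoint, cfc_map_spectrum p.eval G hG.isSelfAdjoint]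
  have hj := hp.eigenvalues_mem_spectrum_real j
  rw [hspec, hG.spectrum_real_eq_range_eigenvalues] at hj
  obtain ⟨_, ⟨i, rfl⟩, hi⟩ := hj
  exact ⟨i, hi.symm⟩

end HermitianMatrix

open scoped ComplexOrder in
theorem stmt4_general {m 𝕜 : Type*} [Fintype m] [DecidableEq m] [RCLike 𝕜] {G : Matrix m m 𝕜}
    (hG : G.PosSemidef) {η L : ℝ} (hL : L = ⨆ i, hG.isHermitian.eigenvalues i)
    (hη0 : 0 ≤ η) (hηL : η * L < 2) {n : ℕ} (hn : n ≠ 0) :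
    (∑ i ∈ Icc 1 n, ((n.choose i : ℝ) * (-1) ^ (i - 1)) • (η • G) ^ (i - 1)).PosDef ∧
      ∀ (hW : (∑ i ∈ Icc 1 n,
          ((n.choose i : ℝ) * (-1) ^ (i - 1)) • (η • G) ^ (i - 1)).IsHermitian) (j : m),
        hW.eigenvalues j ≤ n := by
  have hlt (i : m) : η * hG.isHermitian.eigenvalues i < 2 := by
    have hi : hG.isHermitian.eigenvalues i ≤ L := hL ▸ le_ciSup (Set.finite_range _).bddAbove i
    exact (mul_le_mul_of_nonneg_left hi hη0).trans_lt hηL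
  rw [← aeval_weightPolynomial]
  have heig := exists_eigenvalues_aeval_eq_eval hG.isHermitian (weightPolynomial η n)
  refine ⟨?posDef, fun hW j => ?le⟩
  case posDef =>
    refine (isHermitian_aeval hG.isHermitian _).posDef_iff_eigenvalues_pos.mpr fun j => ?_
    obtain ⟨i, hi⟩ := heig (isHermitian_aeval hG.isHermitian _) j
    exact hi ▸ eval_weightPolynomial_pos (hlt i) hn
  case le =>
    obtain ⟨i, hi⟩ := heig hW j
    exact hi ▸ eval_weightPolynomial_le (mul_nonneg hη0 (hG.eigenvalues_nonneg i)) (hlt i).le n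

/-- For `0 < η < 1/λ_max(AᵀA)` and `n ≥ 1`, the weighting matrix
`W_n = ∑_{i=1}^n C(n,i) (-1)^{i-1} (η AᵀA)^{i-1}` is symmetric positive definite and
every eigenvalue of `W_n` is at most `n`; in particular `λ_max(W_n) ≤ n`. -/
theorem stmt4 {M N : ℕ} (A : Matrix (Fin M) (Fin N) ℝ) (η L : ℝ)
    (hG : (Aᵀ * A).IsHermitian)
    (hL : L = ⨆ i, hG.eigenvalues i)
    (hη0 : 0 < η) (hη1 : η < 1 / L)
    (n : ℕ) (hn : 1 ≤ n) :
    (∑ i ∈ Finset.Icc 1 n,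
        ((n.choose i : ℝ) * (-1) ^ (i - 1)) • (η • (Aᵀ * A)) ^ (i - 1)).PosDef
    ∧ ∀ (hW : (∑ i ∈ Finset.Icc 1 n,
        ((n.choose i : ℝ) * (-1) ^ (i - 1)) • (η • (Aᵀ * A)) ^ (i - 1)).IsHermitian)
        (j : Fin N), hW.eigenvalues j ≤ (n : ℝ) := by
  have hηL : η * L < 1 := (lt_div_iff₀ (one_div_pos.mp (hη0.trans hη1))).mp hη1
  exact stmt4_general (by simpa using posSemidef_conjTranspose_mul_self A) hL hη0.le
    (hηL.trans one_lt_two) (Nat.one_le_iff_ne_zero.mp hn)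
end

section
/- Let A ∈ ℝ^{M×N}, b ∈ ℝ^M, λ > 0, p ≥ 1, η > 0, and let W be a symmetric positive definite N×N matrix such that (1/η) W⁻¹ − AᵀA is positive semidefinite. Define f(x) = (1/2)‖Ax − b‖₂², g(x) = λ‖x‖₁, F(x) = f(x) + g(x), and Q(x, z) = f(z) + (x − z)ᵀ∇f(z) + (1/(2η))‖x − z‖²_{W⁻¹} + p·g(x), where ‖u‖²_{W⁻¹} = uᵀ W⁻¹ u. Then for all x, z ∈ ℝ^N, Q(x, z) ≥ F(x). -/
open Matrix Finset

/-- Least-squares data-fit term `f(x) = (1/2)‖Ax - b‖₂²`. -/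
noncomputable def lsq {M N : ℕ} (A : Matrix (Fin M) (Fin N) ℝ) (b : Fin M → ℝ)
    (x : Fin N → ℝ) : ℝ :=
  (1 / 2 : ℝ) * ((A.mulVec x - b) ⬝ᵥ (A.mulVec x - b))

/-- ℓ₁ regularizer `g(x) = λ‖x‖₁`. -/
noncomputable def l1reg {N : ℕ} (lam : ℝ) (x : Fin N → ℝ) : ℝ :=
  lam * ∑ i, |x i|

/-- EFISTA majorizer
`Q(x,z) = f(z) + (x-z)ᵀ∇f(z) + (1/(2η))‖x-z‖²_{W⁻¹} + p·g(x)`. -/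
noncomputable def efistaQ {M N : ℕ} (A : Matrix (Fin M) (Fin N) ℝ) (b : Fin M → ℝ)
    (lam p η : ℝ) (W : Matrix (Fin N) (Fin N) ℝ) (x z : Fin N → ℝ) : ℝ :=
  lsq A b z + (x - z) ⬝ᵥ Aᵀ.mulVec (A.mulVec z - b)
    + (1 / (2 * η)) * ((x - z) ⬝ᵥ W⁻¹.mulVec (x - z)) + p * l1reg lam x

/-!
The least-squares term is a quadratic with constant Hessian `Aᵀ * A`, so its second-order Taylor
expansion at `z` is exact. Replacing the Hessian by `η⁻¹ • W⁻¹`, which dominates it in the Loewner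
order, can only increase the expansion, and scaling the nonnegative regularizer by `p ≥ 1` can only
increase it as well.
-/

theorem add_dotProduct_add_self {m R : Type*} [Fintype m] [CommSemiring R] (v w : m → R) :
    (v + w) ⬝ᵥ (v + w) = v ⬝ᵥ v + 2 * (w ⬝ᵥ v) + w ⬝ᵥ w := by
  rw [add_dotProduct, dotProduct_add, dotProduct_add, dotProduct_comm v w]
  ring

theorem star_mulVec_dotProduct_mulVec_le_of_posSemidef_sub {m n R : Type*} [Fintype m]
    [Fintype n] [Ring R] [PartialOrder R] [AddRightMono R] [StarRing R] {A : Matrix m n R}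
    {H : Matrix n n R} (hH : (H - Aᴴ * A).PosSemidef) (u : n → R) :
    star (A *ᵥ u) ⬝ᵥ (A *ᵥ u) ≤ star u ⬝ᵥ (H *ᵥ u) := by
  have hgram : star u ⬝ᵥ ((Aᴴ * A) *ᵥ u) = star (A *ᵥ u) ⬝ᵥ (A *ᵥ u) := by
    rw [← mulVec_mulVec, dotProduct_mulVec, ← star_mulVec]
  rw [← hgram, ← sub_nonneg, ← dotProduct_sub, ← sub_mulVec]
  exact hH.dotProduct_mulVec_nonneg u

section LeastSquares

variable {M N : ℕ} (A : Matrix (Fin M) (Fin N) ℝ) (b : Fin M → ℝ)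

theorem lsq_add (z u : Fin N → ℝ) :
    lsq A b (z + u) =
      lsq A b z + u ⬝ᵥ (Aᵀ *ᵥ (A *ᵥ z - b)) + (1 / 2) * ((A *ᵥ u) ⬝ᵥ (A *ᵥ u)) := by
  have hresidual : A *ᵥ (z + u) - b = (A *ᵥ z - b) + A *ᵥ u := by
    rw [mulVec_add, add_sub_right_comm]
  have hadjoint : u ⬝ᵥ (Aᵀ *ᵥ (A *ᵥ z - b)) = (A *ᵥ u) ⬝ᵥ (A *ᵥ z - b) := by
    rw [dotProduct_mulVec, vecMul_transpose]
  rw [lsq, lsq, hresidual, add_dotProduct_add_self, hadjoint]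
  ring

theorem lsq_le_of_posSemidef_sub {H : Matrix (Fin N) (Fin N) ℝ}
    (hH : (H - Aᵀ * A).PosSemidef) (x z : Fin N → ℝ) :
    lsq A b x ≤
      lsq A b z + (x - z) ⬝ᵥ (Aᵀ *ᵥ (A *ᵥ z - b)) + (1 / 2) * ((x - z) ⬝ᵥ (H *ᵥ (x - z))) := by
  rw [← conjTranspose_eq_transpose_of_trivial] at hH
  have hcurv := star_mulVec_dotProduct_mulVec_le_of_posSemidef_sub hH (x - z)
  simp only [star_trivial] at hcurv
  have hexpand := lsq_add A b z (x - z)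
  rw [add_sub_cancel] at hexpand
  linarith

end LeastSquares

theorem l1reg_nonneg {N : ℕ} {lam : ℝ} (hlam : 0 ≤ lam) (x : Fin N → ℝ) : 0 ≤ l1reg lam x :=
  mul_nonneg hlam (sum_nonneg fun i _ => abs_nonneg (x i))

/-- If `W` is symmetric positive definite and `(1/η)W⁻¹ - AᵀA` is positive
semidefinite, `λ > 0`, `p ≥ 1`, `η > 0`, then the EFISTA majorizer dominates the
regularized objective: `Q(x,z) ≥ F(x)` for all `x, z`. -/
theorem stmt10 {M N : ℕ} (A : Matrix (Fin M) (Fin N) ℝ) (b : Fin M → ℝ)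
    (lam p η : ℝ) (hlam : 0 < lam) (hp : 1 ≤ p) (hη : 0 < η)
    (W : Matrix (Fin N) (Fin N) ℝ) (hW : W.PosDef)
    (hcurv : (η⁻¹ • W⁻¹ - Aᵀ * A).PosSemidef) :
    ∀ x z : Fin N → ℝ, lsq A b x + l1reg lam x ≤ efistaQ A b lam p η W x z := by
  intro x z
  have hdata := lsq_le_of_posSemidef_sub A b hcurv x z
  have hreg : l1reg lam x ≤ p * l1reg lam x :=
    le_mul_of_one_le_left (l1reg_nonneg hlam.le x) hp
  have hscale : (1 / 2) * ((x - z) ⬝ᵥ ((η⁻¹ • W⁻¹) *ᵥ (x - z))) =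
      (1 / (2 * η)) * ((x - z) ⬝ᵥ (W⁻¹ *ᵥ (x - z))) := by
    rw [smul_mulVec, dotProduct_smul, smul_eq_mul]
    ring
  rw [hscale] at hdata
  exact add_le_add hdata hreg
end
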